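/- Let (X,T) be a minimal system and k ≥ 2 an integer. Then (X,T^k) is minimal if and only if N_d(X,T) = N_d(X,T^k) for each d ∈ ℕ. -/

import Mathlib

/-- `N_d(X,T)`: the closure in `X^d` of
`{(T^n x, T^{2n} x, …, T^{dn} x) : x ∈ X, n ∈ ℤ}`, for a bijection `T` of the
metric space `X`. -/
def Nd {X : Type*} [MetricSpace X] (T : Equiv.Perm X) (d : ℕ) : Set (Fin d → X) :=
  closure {f | ∃ x : X, ∃ n : ℤ,
    ∀ i : Fin d, f i = (T ^ (((i : ℕ) + 1 : ℤ) * n)) x}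

open Filter Topology

namespace PM

attribute [local instance] Ultrafilter.add Ultrafilter.addSemigroup

section Abstract
variable {S : Type*} [AddSemigroup S]

/-- minimality property of an element -/
def MinE (u : S) : Prop := ∀ g : S, ∃ h : S, h + (g + u) = u

/-- `g` belongs to the local monoid of `w` -/
def InG (w g : S) : Prop := w + g = g ∧ g + w = g

lemma MinE.ext {u : S} (hu : MinE u) (w' : S) : MinE (w' + u) := by
  intro g
  obtain ⟨h, hh⟩ := hu (g + w')
  refine ⟨w' + h, ?_⟩
  rw [add_assoc w' h, ← add_assoc g, hh]

lemma InG.add {w g h : S} (hg : InG w g) (hh : InG w h) : InG w (g + h) := by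
  refine ⟨?_, ?_⟩
  · rw [← add_assoc, hg.1]
  · rw [add_assoc, hh.2]

lemma InG.self {w : S} (hw : w + w = w) : InG w w := ⟨hw, hw⟩

lemma InG.sandwich {w : S} (hw : w + w = w) (g : S) : InG w (w + g + w) := by
  refine ⟨?_, ?_⟩
  · rw [← add_assoc, ← add_assoc, hw]
  · rw [add_assoc, hw]

lemma InG.sandwich_eq {w g : S} (hg : InG w g) : w + g + w = g := by
  rw [hg.1, hg.2]

lemma exists_linv {w g : S} (hw : w + w = w) (hm : MinE w) (hg : InG w g) :
    ∃ r, InG w r ∧ r + g = w := by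
  obtain ⟨h, hh⟩ := hm g
  rw [hg.2] at hh
  refine ⟨w + h + w, InG.sandwich hw h, ?_⟩
  rw [add_assoc, hg.1, add_assoc, hh, hw]

lemma exists_inv {w g : S} (hw : w + w = w) (hm : MinE w) (hg : InG w g) :
    ∃ r, InG w r ∧ r + g = w ∧ g + r = w := by
  obtain ⟨r, hr, hrg⟩ := exists_linv hw hm hg
  obtain ⟨r', hr', hr'r⟩ := exists_linv hw hm hr
  have : r' = g := by
    calc r' = r' + w := hr'.2.symm
      _ = r' + r + g := by rw [← hrg, add_assoc]
      _ = g := by rw [hr'r, hg.1]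
  subst this
  exact ⟨r, hr, hrg, hr'r⟩

lemma idem_eq {w e : S} (hw : w + w = w) (hm : MinE w) (he : InG w e) (hee : e + e = e) :
    e = w := by
  obtain ⟨r, hr, hrg⟩ := exists_linv hw hm he
  calc e = w + e := he.1.symm
    _ = r + (e + e) := by rw [← hrg, add_assoc]
    _ = w := by rw [hee, hrg]

end Abstract

section Ultra
variable {A B C : Type*} [AddCommGroup A] [AddCommGroup B] [AddCommGroup C]

lemma map_add' (φ : A →+ B) (U V : Ultrafilter A) :
    (U + V).map φ = U.map φ + V.map φ := by
  apply Ultrafilter.coe_inj.mp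
  apply Filter.ext'
  intro p
  rw [Ultrafilter.eventually_add]
  simp only [Ultrafilter.coe_map, Filter.eventually_map]
  rw [Ultrafilter.eventually_add]
  simp only [map_add]

lemma map_congr' {α β : Type*} {U : Ultrafilter α} {f g : α → β}
    (h : ∀ᶠ a in (U : Filter α), f a = g a) : U.map f = U.map g := by
  apply Ultrafilter.coe_inj.mp
  simp only [Ultrafilter.coe_map]
  exact Filter.map_congr h

lemma InG.map {w g : Ultrafilter A} (h : InG w g) (φ : A →+ B) : InG (w.map φ) (g.map φ) := by
  refine ⟨?_, ?_⟩
  · rw [← map_add', h.1]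
  · rw [← map_add', h.2]

lemma pure_add_pure' (a b : A) : (pure a + pure b : Ultrafilter A) = pure (a + b) := by
  apply Ultrafilter.coe_inj.mp
  apply Filter.ext'
  intro p
  rw [Ultrafilter.eventually_add]
  simp

lemma add_pure_zero (u : Ultrafilter A) : u + pure 0 = u := by
  apply Ultrafilter.coe_inj.mp
  apply Filter.ext'
  intro p
  rw [Ultrafilter.eventually_add]
  simp

theorem exists_min_idem (a : Ultrafilter A) :
    ∃ b : Ultrafilter A, MinE (b + a) ∧ (b + a) + (b + a) = b + a := by
  let S : Set (Set (Ultrafilter A)) :=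
    {N | IsClosed N ∧ N.Nonempty ∧ ∀ g, ∀ x ∈ N, g + x ∈ N}
  have hcl : ∀ x : Ultrafilter A, Set.range (· + x) ∈ S := by
    intro x
    refine ⟨(isCompact_range (Ultrafilter.continuous_add_left x)).isClosed, ⟨_, ⟨x, rfl⟩⟩, ?_⟩
    rintro g _ ⟨y, rfl⟩
    exact ⟨g + y, add_assoc _ _ _⟩
  obtain ⟨M, hMa, hM⟩ := zorn_superset_nonempty S (by
    intro c hcs hc hcne
    refine ⟨⋂₀ c, ⟨isClosed_sInter fun t ht => (hcs ht).1, ?_, fun g x hx => ?_⟩, fun s hs =>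
      Set.sInter_subset_of_mem hs⟩
    · convert!
        @IsCompact.nonempty_iInter_of_directed_nonempty_isCompact_isClosed _ _ _ hcne.coe_sort
          ((↑) : c → Set (Ultrafilter A)) ?_ ?_ ?_ ?_
      · exact Set.sInter_eq_iInter
      · refine DirectedOn.directed_val (IsChain.directedOn hc.symm)
      exacts [fun i => (hcs i.prop).2.1, fun i => (hcs i.prop).1.isCompact,
        fun i => (hcs i.prop).1]
    · rw [Set.mem_sInter]
      exact fun t ht => (hcs ht).2.2 g x (Set.mem_sInter.mp hx t ht)) _ (hcl a)
  obtain ⟨hMc, hMn, hMi⟩ := hM.prop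
  obtain ⟨u, huM, huu⟩ := exists_idempotent_in_compact_add_subsemigroup
    Ultrafilter.continuous_add_left M hMn hMc.isCompact (fun x _ y hy => hMi x y hy)
  obtain ⟨b, rfl⟩ := hMa huM
  refine ⟨b, ?_, huu⟩
  intro g
  have hsub : Set.range (· + (g + (b + a))) ⊆ M := by
    rintro _ ⟨y, rfl⟩
    exact hMi _ _ (hMi _ _ huM)
  have := hM.eq_of_subset (hcl (g + (b + a))) hsub
  rw [← this] at huM
  exact huM

/-- dilation -/
def dil (q : ℤ) : ℤ →+ ℤ := AddMonoidHom.mulLeft q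

lemma dil_apply (q n : ℤ) : dil q n = q * n := rfl

lemma dil_inj {q : ℤ} (hq : q ≠ 0) {U V : Ultrafilter ℤ} (h : U.map (dil q) = V.map (dil q)) :
    U = V := by
  have key : ∀ U : Ultrafilter ℤ, (U.map (dil q)).map (fun n => n / q) = U := by
    intro U
    rw [Ultrafilter.map_map]
    have : (fun n => n / q) ∘ (dil q) = id := by
      funext n
      simp [dil_apply, Int.mul_ediv_cancel_left n hq]
    rw [this, Ultrafilter.map_id]
  rw [← key U, h, key V]

lemma idem_dvd {e : Ultrafilter ℤ} (he : e + e = e) (q : ℕ) (hq : q ≠ 0) :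
    ∀ᶠ n in (e : Filter ℤ), (q : ℤ) ∣ n := by
  have : NeZero q := ⟨hq⟩
  obtain ⟨z, hz⟩ := (e.map (Int.castAddHom (ZMod q))).eq_pure_of_finite
  have h1 := map_add' (Int.castAddHom (ZMod q)) e e
  rw [he, hz, pure_add_pure'] at h1
  have h2 : z = z + z := Ultrafilter.pure_injective h1
  have h3 : z = 0 := by simpa using h2
  have h4 : ∀ᶠ y in ((e.map (Int.castAddHom (ZMod q)) : Ultrafilter (ZMod q)) : Filter (ZMod q)),
      y = 0 := by
    rw [hz, h3]
    simp
  rw [Ultrafilter.coe_map, Filter.eventually_map] at h4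
  filter_upwards [h4] with n hn
  exact (ZMod.intCast_zmod_eq_zero_iff_dvd n q).1 hn

/-- a lift of a minimal idempotent -/
theorem exists_lift {w : Ultrafilter ℤ} (hw : w + w = w) (hm : MinE w) (ι : ℤ →+ A) :
    ∃ u : Ultrafilter A, u + u = u ∧ MinE u ∧
      ∀ (ℓ : A →+ ℤ) (q : ℕ), q ≠ 0 → ℓ.comp ι = dil q → u.map ℓ = w.map (dil q) := by
  have hw' : w.map ι + w.map ι = w.map ι := by rw [← map_add', hw]
  obtain ⟨b, hb, hbb⟩ := exists_min_idem (w.map ι)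
  have hbw : b + w.map ι + w.map ι = b + w.map ι := by rw [add_assoc, hw']
  generalize b + w.map ι = u0 at *
  have huu : w.map ι + u0 + (w.map ι + u0) = w.map ι + u0 := by
    rw [add_assoc, ← add_assoc u0, hbw, hbb]
  refine ⟨w.map ι + u0, huu, hb.ext _, ?_⟩
  intro ℓ q hq hℓ
  have hG : InG (w.map ι) (w.map ι + u0) :=
    ⟨by rw [← add_assoc, hw'], by rw [add_assoc, hbw]⟩
  generalize w.map ι + u0 = u at *
  have hq' : (q : ℤ) ≠ 0 := by exact_mod_cast hq
  have hGe := hG.map ℓ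
  have hee : u.map ℓ + u.map ℓ = u.map ℓ := by rw [← map_add', huu]
  have hwd : (w.map ι).map ℓ = w.map (dil q) := by
    rw [Ultrafilter.map_map, ← hℓ]; rfl
  rw [hwd] at hGe
  generalize u.map ℓ = e at *
  obtain ⟨e', he'⟩ : ∃ e' : Ultrafilter ℤ, e'.map (dil q) = e := by
    refine ⟨e.map (fun n => n / q), ?_⟩
    rw [Ultrafilter.map_map]
    conv_rhs => rw [← Ultrafilter.map_id e]
    apply map_congr'
    filter_upwards [idem_dvd hee q hq] with n hn
    simp [dil_apply, Int.mul_ediv_cancel' hn]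
  subst he'
  rw [← map_add'] at hee
  have h1 := dil_inj hq' hee
  have h2 : InG w e' := by
    refine ⟨dil_inj hq' ?_, dil_inj hq' ?_⟩
    · rw [map_add', hGe.1]
    · rw [map_add', hGe.2]
  rw [idem_eq hw hm h2 h1]

end Ultra
end PM
open Filter Topology

namespace PM

attribute [local instance] Ultrafilter.add Ultrafilter.addSemigroup

/-- linear form -/
def form {s : ℕ} (a : ℤ) (c : Fin s → ℤ) : ℤ × (Fin s → ℤ) →+ ℤ :=
  AddMonoidHom.mk' (fun p => a * p.1 + ∑ i, c i * p.2 i) (by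
    intro p q
    simp only [Prod.fst_add, Prod.snd_add, Pi.add_apply, mul_add, Finset.sum_add_distrib]
    ring)

lemma form_apply {s : ℕ} (a : ℤ) (c : Fin s → ℤ) (p : ℤ × (Fin s → ℤ)) :
    form a c p = a * p.1 + ∑ i, c i * p.2 i := rfl

/-- kill coordinate `j` -/
def theta {s : ℕ} (j : Fin s) : ℤ × (Fin s → ℤ) →+ ℤ × (Fin s → ℤ) :=
  AddMonoidHom.mk' (fun p => (p.1, fun i => if i = j then 0 else p.2 i)) (by
    intro p q
    ext i
    · simp
    · by_cases h : i = j <;> simp [h])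

lemma form_theta {s : ℕ} (a : ℤ) (c : Fin s → ℤ) (j : Fin s) :
    (form a c).comp (theta j) = form a (fun i => if i = j then 0 else c i) := by
  apply AddMonoidHom.ext
  intro p
  simp only [AddMonoidHom.comp_apply, form_apply, theta, AddMonoidHom.mk'_apply]
  congr 1
  apply Finset.sum_congr rfl
  intro i _
  by_cases h : i = j <;> simp [h]

/-- coordinate `a + i n` -/
def kap (i : ℤ) : ℤ × ℤ →+ ℤ :=
  AddMonoidHom.mk' (fun p => p.1 + i * p.2) (by
    intro p q
    simp only [Prod.fst_add, Prod.snd_add]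
    ring)

lemma kap_apply (i : ℤ) (p : ℤ × ℤ) : kap i p = p.1 + i * p.2 := rfl

lemma dil_one_map (w : Ultrafilter ℤ) : w.map (dil 1) = w := by
  conv_rhs => rw [← Ultrafilter.map_id w]
  apply map_congr'
  filter_upwards with n
  simp [dil_apply]

/-- powers of `f` in the group of `w` -/
def Fp (w f : Ultrafilter ℤ) : ℕ → Ultrafilter ℤ
  | 0 => w
  | n + 1 => f + Fp w f n

/-- auxiliary values -/
def Av (w f : Ultrafilter ℤ) : ℕ → ℕ → Ultrafilter ℤ
  | 0, t => Fp w f t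
  | 1, _ => f
  | _ + 2, _ => w

/-- auxiliary products -/
def Kv (w f : Ultrafilter ℤ) (s : ℕ) : ℕ → Ultrafilter ℤ
  | 0 => w
  | j + 1 => Av w f j s + Kv w f s j

section
variable {w f : Ultrafilter ℤ}

lemma Fp_in (hw : w + w = w) (hf : InG w f)
    (n : ℕ) : InG w (Fp w f n) := by
  induction n with
  | zero => exact InG.self hw
  | succ n ih => exact hf.add ih

lemma Av_in (hw : w + w = w) (hf : InG w f)
    (j t : ℕ) : InG w (Av w f j t) := by
  match j with
  | 0 => exact Fp_in hw hf t
  | 1 => exact hf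
  | _ + 2 => exact InG.self hw

lemma Av_step (hw : w + w = w) (hf : InG w f)
    (j t : ℕ) : Av w f (j + 1) (t + 1) + Av w f j t = Av w f j (t + 1) := by
  match j with
  | 0 => rfl
  | 1 => exact hf.1
  | _ + 2 => exact hw

lemma Kv_in (hw : w + w = w) (hf : InG w f)
    (s j : ℕ) : InG w (Kv w f s j) := by
  induction j with
  | zero => exact InG.self hw
  | succ j ih => exact (Av_in hw hf j s).add ih

lemma Kv_eq (hw : w + w = w) (hf : InG w f)
    (s j : ℕ) : Kv w f s (j + 2) = Fp w f (s + 1) := by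
  induction j with
  | zero =>
    change f + (Fp w f s + w) = f + Fp w f s
    rw [(Fp_in hw hf s).2]
  | succ j ih =>
    change w + Kv w f s (j + 2) = _
    rw [ih, (Fp_in hw hf _).1]

/-- the step producing `Q_s` -/
theorem exists_Q (hw : w + w = w) (hf : InG w f)
    (s : ℕ) (W : Ultrafilter (ℤ × ℤ))
    (hW : ∀ i : ℕ, i ≤ s → W.map (kap i) = Fp w f i)
    (hWs : InG w (W.map (kap ((s + 1 : ℕ) : ℤ))))
    (u : Ultrafilter (ℤ × (Fin (s + 1) → ℤ))) (hu : u + u = u) (hum : MinE u)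
    (hul : ∀ (q : ℕ) (c : Fin (s + 1) → ℤ), q ≠ 0 → u.map (form q c) = w.map (dil q))
    (j : ℕ) (hj : j ≤ s + 1) :
    ∃ Q : Ultrafilter (ℤ × (Fin (s + 1) → ℤ)), InG u Q ∧
      (∀ (q : ℕ) (c : Fin (s + 1) → ℤ), q ≠ 0 → (∃ i : Fin (s + 1), (i : ℕ) < j ∧ c i = 0) →
        Q.map (form q c) = w.map (dil q)) ∧
      (∀ I : Finset (Fin (s + 1)), (∀ i : Fin (s + 1), (i : ℕ) < j → i ∈ I) → I.card ≤ s →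
        Q.map (form 1 (fun i => if i ∈ I then 1 else 0)) = Av w f j I.card) ∧
      Q.map (form 1 (fun _ => 1)) + Kv w f s j = W.map (kap ((s + 1 : ℕ) : ℤ)) := by
  have hul1 : ∀ c : Fin (s + 1) → ℤ, u.map (form 1 c) = w := by
    intro c
    have := hul 1 c one_ne_zero
    rwa [Nat.cast_one, dil_one_map] at this
  induction j with
  | zero =>
    let ι : ℤ × ℤ → ℤ × (Fin (s + 1) → ℤ) := fun p => (p.1, fun _ => p.2)
    have hι : ∀ I : Finset (Fin (s + 1)),
        (W.map ι).map (form 1 (fun i => if i ∈ I then 1 else 0)) = W.map (kap (I.card : ℤ)) := by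
      intro I
      rw [Ultrafilter.map_map]
      apply map_congr'
      filter_upwards with p
      simp [form_apply, kap_apply, ι]
    refine ⟨u + W.map ι + u, InG.sandwich hu _, ?_, ?_, ?_⟩
    · rintro q c hq ⟨i, hi, _⟩
      exact absurd hi (Nat.not_lt_zero _)
    · intro I _ hI
      rw [map_add', map_add', hul1, hι, hW _ hI]
      exact (Fp_in hw hf _).sandwich_eq
    · have := hι Finset.univ
      simp only [Finset.mem_univ, if_true, Finset.card_univ, Fintype.card_fin] at this
      rw [map_add', map_add', hul1, this]
      change _ + w = _
      rw [hWs.sandwich_eq, hWs.2]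
  | succ j ih =>
    obtain ⟨Q, hQ, h1, h2, h3⟩ := ih (by omega)
    let jj : Fin (s + 1) := ⟨j, by omega⟩
    obtain ⟨R, hR, hRl, hRr⟩ := exists_inv hu hum
      (InG.sandwich hu (Q.map (theta jj)))
    have hcomp : ∀ (a : ℤ) (c : Fin (s + 1) → ℤ), (Q.map (theta jj)).map (form a c) =
        Q.map (form a (fun i => if i = jj then 0 else c i)) := by
      intro a c
      rw [Ultrafilter.map_map, ← form_theta]
      rfl
    have hQG : ∀ c, InG w (Q.map (form 1 c)) := by
      intro c
      have := hQ.map (form 1 c)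
      rwa [hul1] at this
    have hR1 : ∀ c, R.map (form 1 c) + Q.map (form 1 (fun i => if i = jj then 0 else c i)) = w ∧
        Q.map (form 1 (fun i => if i = jj then 0 else c i)) + R.map (form 1 c) = w := by
      intro c
      have e1 := congrArg (Ultrafilter.map (form 1 c)) hRl
      have e2 := congrArg (Ultrafilter.map (form 1 c)) hRr
      simp only [map_add', hul1, hcomp] at e1 e2
      rw [(hQG _).sandwich_eq] at e1 e2
      exact ⟨e1, e2⟩
    have hRG : ∀ c, InG w (R.map (form 1 c)) := by
      intro c
      have := hR.map (form 1 c)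
      rwa [hul1] at this
    refine ⟨Q + R, hQ.add hR, ?_, ?_, ?_⟩
    · rintro q c hq ⟨i, hi, hci⟩
      have hww : w.map (dil q) + w.map (dil q) = w.map (dil q) := by rw [← map_add', hw]
      by_cases hij : i = jj
      · have hcc : (fun i => if i = jj then 0 else c i) = c := by
          funext i'
          by_cases h : i' = jj
          · simp [h, ← hij, hci]
          · simp [h]
        have e2 := congrArg (Ultrafilter.map (form q c)) hRr
        have hQ' := hQ.map (form q c)
        simp only [map_add', hcomp, hcc, hQ'.sandwich_eq] at e2
        rw [map_add', e2, hul q c hq]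
      · have hi' : (i : ℕ) < j := by
          have : (i : ℕ) ≠ j := fun h => hij (Fin.ext h)
          omega
        have e1 := congrArg (Ultrafilter.map (form q c)) hRl
        have hRG' := hR.map (form q c)
        simp only [map_add', hcomp] at e1
        rw [h1 q _ hq ⟨i, hi', by simp [hci]⟩, hul q c hq, hww, hww] at e1
        rw [hul q c hq] at hRG'
        rw [hRG'.2] at e1
        rw [map_add', e1, h1 q c hq ⟨i, hi', hci⟩, hww]
    · intro I hI hIc
      have hjI : jj ∈ I := hI jj (by simp [jj])
      have hc : (fun i => if i = jj then 0 else (if i ∈ I then (1 : ℤ) else 0)) =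
          fun i => if i ∈ I.erase jj then 1 else 0 := by
        funext i
        by_cases h : i = jj <;> simp [h]
      have hcard : (I.erase jj).card + 1 = I.card := Finset.card_erase_add_one hjI
      have hr := (hR1 (fun i => if i ∈ I then 1 else 0)).2
      rw [hc, h2 (I.erase jj) ?_ (by omega)] at hr
      · rw [map_add', h2 I (fun i hi => hI i (by omega)) hIc, ← hcard, ← Av_step hw hf, add_assoc,
          hr, (Av_in hw hf _ _).2]
      · intro i hi
        refine Finset.mem_erase.2 ⟨?_, hI i (by omega)⟩
        rintro rfl
        simp [jj] at hi
    · have hc : (fun i => if i = jj then 0 else (1 : ℤ)) =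
          fun i => if i ∈ Finset.univ.erase jj then 1 else 0 := by
        funext i
        by_cases h : i = jj <;> simp [h]
      have hcard : (Finset.univ.erase jj).card = s := by
        simp [Finset.card_erase_of_mem]
      have hr := (hR1 (fun _ => 1)).1
      rw [hc, h2 (Finset.univ.erase jj) ?_ (by omega), hcard] at hr
      · rw [map_add']
        change _ + (Av w f j s + Kv w f s j) = _
        rw [add_assoc, ← add_assoc (R.map _), hr, (Kv_in hw hf s j).1, h3]
      · intro i hi
        refine Finset.mem_erase.2 ⟨?_, Finset.mem_univ _⟩
        rintro rfl
        simp [jj] at hi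

/-- existence of `V` -/
theorem exists_V (hw : w + w = w) (hf : InG w f)
    (hm : MinE w) (s : ℕ) (hs : 1 ≤ s) (W : Ultrafilter (ℤ × ℤ))
    (hW : ∀ i : ℕ, i ≤ s → W.map (kap i) = Fp w f i)
    (hWs : InG w (W.map (kap ((s + 1 : ℕ) : ℤ)))) :
    ∃ V : Ultrafilter (ℤ × ℤ), (∀ i : ℕ, i ≤ s → V.map (kap i) = w) ∧
      V.map (kap ((s + 1 : ℕ) : ℤ)) + Fp w f (s + 1) = W.map (kap ((s + 1 : ℕ) : ℤ)) := by
  obtain ⟨u, hu, hum, hul⟩ := exists_lift hw hm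
    (AddMonoidHom.inl ℤ (Fin (s + 1) → ℤ))
  have hul' : ∀ (q : ℕ) (c : Fin (s + 1) → ℤ), q ≠ 0 → u.map (form q c) = w.map (dil q) := by
    intro q c hq
    apply hul _ q hq
    apply AddMonoidHom.ext
    intro n
    simp [form_apply, dil_apply]
  obtain ⟨Q, hQ, h1, h2, h3⟩ := exists_Q hw hf s W hW hWs u hu hum hul' (s + 1) le_rfl
  have hK : Kv w f s (s + 1) = Fp w f (s + 1) := by
    obtain ⟨s', hs'⟩ : ∃ s', s + 1 = s' + 2 := ⟨s - 1, by omega⟩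
    have := Kv_eq hw hf s s'
    rwa [← hs'] at this
  rw [hK] at h3
  have : Nontrivial (Fin (s + 1)) := Fin.nontrivial_iff_two_le.2 (by omega)
  set q : ℕ := (s + 1).factorial with hq
  have hq0 : q ≠ 0 := Nat.factorial_ne_zero _
  have hqz : (q : ℤ) ≠ 0 := by exact_mod_cast hq0
  -- concentration
  have hd1 : ∀ᶠ p in (Q : Filter (ℤ × (Fin (s + 1) → ℤ))), (q : ℤ) ∣ p.1 := by
    have e := h1 1 (fun _ => 0) one_ne_zero ⟨0, by simp, rfl⟩
    rw [Nat.cast_one, dil_one_map] at e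
    have := idem_dvd hw q hq0
    rw [← e, Ultrafilter.coe_map, Filter.eventually_map] at this
    filter_upwards [this] with p hp
    simpa [form_apply] using hp
  have hd2 : ∀ j : Fin (s + 1), ∀ᶠ p in (Q : Filter (ℤ × (Fin (s + 1) → ℤ))),
      (q : ℤ) ∣ p.1 + p.2 j := by
    intro j
    obtain ⟨i, hij⟩ := exists_ne j
    have e := h1 1 (fun i => if i = j then 1 else 0) one_ne_zero ⟨i, i.2, by simp [hij]⟩
    rw [Nat.cast_one, dil_one_map] at e
    have := idem_dvd hw q hq0
    rw [← e, Ultrafilter.coe_map, Filter.eventually_map] at this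
    filter_upwards [this] with p hp
    simpa [form_apply] using hp
  have hd3 := Filter.eventually_all.2 hd2
  let D : Ultrafilter (ℤ × (Fin (s + 1) → ℤ)) := Q.map (fun p => (p.1 / q, fun i => p.2 i / q))
  have hD : ∀ (a : ℤ) (c : Fin (s + 1) → ℤ), (D.map (form a c)).map (dil q) = Q.map (form a c) := by
    intro a c
    rw [Ultrafilter.map_map, Ultrafilter.map_map]
    apply map_congr'
    filter_upwards [hd1, hd3] with p hp1 hp2
    simp only [Function.comp, form_apply, dil_apply, mul_add, Finset.mul_sum]
    have hp3 : ∀ i, (q : ℤ) ∣ p.2 i := fun i => (Int.dvd_add_right hp1).1 (hp2 i)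
    rw [mul_left_comm, Int.mul_ediv_cancel' hp1]
    congr 1
    apply Finset.sum_congr rfl
    intro i _
    rw [mul_left_comm, Int.mul_ediv_cancel' (hp3 i)]
  let Bv : Fin (s + 1) → ℤ := fun j => ((q / (s + 1 - (j : ℕ)) : ℕ) : ℤ)
  have hB : ∀ j : Fin (s + 1), (((s + 1 : ℕ) : ℤ) - ((j : ℕ) : ℤ)) * Bv j = q := by
    intro j
    have hj := j.2
    have hdv : (s + 1 - (j : ℕ)) ∣ q := Nat.dvd_factorial (by omega) (by omega)
    have := Nat.mul_div_cancel' hdv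
    have h4 : (((s + 1 - (j : ℕ) : ℕ)) : ℤ) = ((s + 1 : ℕ) : ℤ) - ((j : ℕ) : ℤ) := by
      rw [Nat.cast_sub (by omega)]
    rw [← h4]
    simp only [Bv]
    exact_mod_cast this
  let ρ : ℤ × (Fin (s + 1) → ℤ) → ℤ × ℤ := fun p =>
    (q * p.1 - ∑ j : Fin (s + 1), ((j : ℕ) : ℤ) * Bv j * p.2 j, ∑ j, Bv j * p.2 j)
  have hρ : ∀ i : ℤ, (D.map ρ).map (kap i) =
      D.map (form q (fun j => (i - ((j : ℕ) : ℤ)) * Bv j)) := by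
    intro i
    rw [Ultrafilter.map_map]
    apply map_congr'
    filter_upwards with p
    simp only [Function.comp, form_apply, kap_apply, ρ, Finset.mul_sum]
    rw [sub_add_eq_add_sub, add_sub_assoc, ← Finset.sum_sub_distrib]
    congr 1
    apply Finset.sum_congr rfl
    intro j _
    ring
  refine ⟨D.map ρ, ?_, ?_⟩
  · intro i hi
    apply dil_inj hqz
    rw [hρ, hD]
    exact h1 q _ hq0 ⟨⟨i, by omega⟩, by simp; omega, by simp⟩
  · rw [hρ, ← h3]
    congr 1
    rw [← hD, Ultrafilter.map_map]
    apply map_congr'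
    filter_upwards with p
    simp only [Function.comp, form_apply, dil_apply, hB, mul_add, Finset.mul_sum, one_mul]

theorem exists_W (hw : w + w = w) (hf : InG w f)
    (hm : MinE w) (s : ℕ) :
    ∃ W : Ultrafilter (ℤ × ℤ), ∀ i : ℕ, i ≤ s + 1 → W.map (kap i) = Fp w f i := by
  obtain ⟨u, hu, hum, hul⟩ := exists_lift hw hm (AddMonoidHom.inl ℤ ℤ)
  have hul' : ∀ i : ℤ, u.map (kap i) = w := by
    intro i
    rw [hul (kap i) 1 one_ne_zero ?_, Nat.cast_one, dil_one_map]
    apply AddMonoidHom.ext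
    intro n
    simp [kap_apply, dil_apply]
  induction s with
  | zero =>
    refine ⟨u + f.map (fun n => ((0 : ℤ), n)) + u, ?_⟩
    intro i hi
    rw [map_add', map_add', hul', Ultrafilter.map_map]
    interval_cases i
    · have : f.map (⇑(kap ((0 : ℕ) : ℤ)) ∘ fun n => ((0 : ℤ), n)) = pure 0 := by
        apply Ultrafilter.coe_inj.mp
        have h0 : (⇑(kap ((0 : ℕ) : ℤ)) ∘ fun n : ℤ => ((0 : ℤ), n)) = fun _ => 0 := by
          funext n; simp [kap_apply]
        rw [h0, Ultrafilter.coe_map, Filter.map_const]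
        rfl
      rw [this, add_pure_zero]
      exact hw
    · have : f.map (⇑(kap ((1 : ℕ) : ℤ)) ∘ fun n => ((0 : ℤ), n)) = f := by
        conv_rhs => rw [← Ultrafilter.map_id f]
        apply map_congr'
        filter_upwards with n
        simp [kap_apply]
      rw [this, hf.sandwich_eq]
      exact hf.2.symm
  | succ s ih =>
    obtain ⟨W0, hW0⟩ := ih
    let W := u + W0 + u
    have hW : ∀ i : ℕ, i ≤ s + 1 → W.map (kap i) = Fp w f i := by
      intro i hi
      simp only [W, map_add', hul', hW0 i hi]
      exact (Fp_in hw hf i).sandwich_eq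
    have hWs : InG w (W.map (kap ((s + 1 + 1 : ℕ) : ℤ))) := by
      simp only [W, map_add', hul']
      exact InG.sandwich hw _
    obtain ⟨V, hV, hVs⟩ := exists_V hw hf hm (s + 1) (by omega) W hW hWs
    obtain ⟨R, hR, hRl, hRr⟩ := exists_inv hu hum (InG.sandwich hu V)
    have hR1 : ∀ i : ℤ, R.map (kap i) + (w + V.map (kap i) + w) = w := by
      intro i
      have := congrArg (Ultrafilter.map (kap i)) hRl
      simpa only [map_add', hul'] using this
    have hRG : ∀ i : ℤ, InG w (R.map (kap i)) := by
      intro i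
      have := hR.map (kap i)
      rwa [hul'] at this
    refine ⟨R + W, ?_⟩
    intro i hi
    rw [map_add']
    rcases Nat.lt_or_ge i (s + 2) with h | h
    · have e := hR1 i
      rw [hV i (by omega), hw, hw, (hRG _).2] at e
      rw [e, hW i (by omega), (Fp_in hw hf i).1]
    · obtain rfl : i = s + 1 + 1 := by omega
      have e := hR1 ((s + 1 + 1 : ℕ) : ℤ)
      have hF := Fp_in hw hf (s + 1 + 1)
      calc R.map (kap ((s + 1 + 1 : ℕ) : ℤ)) + W.map (kap ((s + 1 + 1 : ℕ) : ℤ))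
          = R.map (kap ((s + 1 + 1 : ℕ) : ℤ)) + (w + V.map (kap ((s + 1 + 1 : ℕ) : ℤ)) + w)
            + Fp w f (s + 1 + 1) := by
              rw [← hVs]
              conv_lhs => rw [← (hRG ((s + 1 + 1 : ℕ) : ℤ)).2, ← hF.1]
              simp only [add_assoc]
        _ = Fp w f (s + 1 + 1) := by rw [e, hF.1]

end
end PM
open Filter Topology

namespace PM

attribute [local instance] Ultrafilter.add Ultrafilter.addSemigroup

section Dyn
variable {X : Type*} [MetricSpace X] [CompactSpace X] (T : X ≃ₜ X)

lemma cont_zpow (n : ℤ) : Continuous (fun x => (T.toEquiv ^ n) x) := by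
  have hn : ∀ n : ℕ, Continuous (fun x => (T.toEquiv ^ n) x) := by
    intro n
    induction n with
    | zero => exact continuous_id
    | succ n ih =>
      simp only [pow_succ, Equiv.Perm.mul_apply]
      exact ih.comp T.continuous
  have hn' : ∀ n : ℕ, Continuous (fun x => ((T.toEquiv)⁻¹ ^ n) x) := by
    intro n
    induction n with
    | zero => exact continuous_id
    | succ n ih =>
      simp only [pow_succ, Equiv.Perm.mul_apply]
      exact ih.comp T.symm.continuous
  cases n with
  | ofNat n => simpa using hn n
  | negSucc n =>
    have := hn' (n + 1)
    simpa [zpow_negSucc, inv_pow] using this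

lemma zadd (m n : ℤ) (x : X) : (T.toEquiv ^ (m + n)) x = (T.toEquiv ^ m) ((T.toEquiv ^ n) x) := by
  rw [zpow_add, Equiv.Perm.mul_apply]

lemma zk (k : ℕ) (n : ℤ) (x : X) :
    ((T.toEquiv ^ k) ^ n) x = (T.toEquiv ^ ((k : ℤ) * n)) x := by
  rw [zpow_mul, zpow_natCast]

/-- `x` tends to `y` along `U` -/
def Lim (U : Ultrafilter ℤ) (x y : X) : Prop :=
  Tendsto (fun n : ℤ => (T.toEquiv ^ n) x) (U : Filter ℤ) (𝓝 y)

variable {T}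

lemma Lim.add {U V : Ultrafilter ℤ} {x y z : X} (hV : Lim T V x y) (hU : Lim T U y z) :
    Lim T (U + V) x z := by
  rw [Lim, tendsto_nhds] at *
  intro s hs hz
  have h1 := hU s hs hz
  change ∀ᶠ n in ((U + V : Ultrafilter ℤ) : Filter ℤ), (T.toEquiv ^ n) x ∈ s
  rw [Ultrafilter.eventually_add]
  filter_upwards [h1] with m hm
  have h2 := hV _ (hs.preimage (cont_zpow T m)) hm
  filter_upwards [h2] with n hn
  rw [zadd]
  exact hn

lemma exists_lim (U : Ultrafilter ℤ) (x : X) : ∃ y, Lim T U x y :=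
  ⟨_, (U.map (fun n : ℤ => (T.toEquiv ^ n) x)).le_nhds_lim⟩

lemma exists_ultra {y z : X} {P : Set ℤ} (h : z ∈ closure ((fun n : ℤ => (T.toEquiv ^ n) y) '' P)) :
    ∃ V : Ultrafilter ℤ, (∀ᶠ n in (V : Filter ℤ), n ∈ P) ∧ Lim T V y z := by
  have hne : (comap (fun n : ℤ => (T.toEquiv ^ n) y) (𝓝 z) ⊓ 𝓟 P).NeBot := by
    rw [inf_principal_neBot_iff]
    rintro U ⟨V, hV, hVU⟩
    obtain ⟨_, h1, n, hn, rfl⟩ := mem_closure_iff_nhds.1 h V hV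
    exact ⟨n, hVU h1, hn⟩
  refine ⟨Ultrafilter.of (comap (fun n : ℤ => (T.toEquiv ^ n) y) (𝓝 z) ⊓ 𝓟 P), ?_, ?_⟩
  · have := Ultrafilter.of_le (comap (fun n : ℤ => (T.toEquiv ^ n) y) (𝓝 z) ⊓ 𝓟 P)
    exact (this.trans inf_le_right) (mem_principal_self P)
  · have := Ultrafilter.of_le (comap (fun n : ℤ => (T.toEquiv ^ n) y) (𝓝 z) ⊓ 𝓟 P)
    exact tendsto_iff_comap.2 (this.trans inf_le_left)

theorem exists_w (hT : ∀ x : X, Dense (Set.range fun n : ℤ => (T.toEquiv ^ n) x)) (x : X) :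
    ∃ w : Ultrafilter ℤ, w + w = w ∧ MinE w ∧ Lim T w x x := by
  obtain ⟨b, hb, -⟩ := exists_min_idem (pure 0 : Ultrafilter ℤ)
  generalize b + pure 0 = u at hb
  let C : Set (Ultrafilter ℤ) := Set.range (· + u) ∩ {v | Lim T v x x}
  have hC : IsClosed C := by
    refine (isCompact_range (Ultrafilter.continuous_add_left u)).isClosed.inter ?_
    have : {v | Lim T v x x} = ⋂ s ∈ 𝓝 x,
        {v : Ultrafilter ℤ | (fun n : ℤ => (T.toEquiv ^ n) x) ⁻¹' s ∈ v} := by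
      ext v
      simp only [Set.mem_iInter]
      rfl
    rw [this]
    exact isClosed_biInter fun s _ => ultrafilter_isClosed_basic _
  have hCn : C.Nonempty := by
    obtain ⟨y, hy⟩ := exists_lim (T := T) u x
    obtain ⟨h, -, hh⟩ := exists_ultra (T := T) (y := y) (z := x) (P := Set.univ)
      (by rw [Set.image_univ]; exact hT y x)
    exact ⟨h + u, ⟨h, rfl⟩, hy.add hh⟩
  obtain ⟨w, hwC, hww⟩ := exists_idempotent_in_compact_add_subsemigroup
    Ultrafilter.continuous_add_left C hCn hC.isCompact (by
      rintro v ⟨-, hv⟩ _ ⟨⟨b', rfl⟩, hv'⟩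
      exact ⟨⟨v + b', add_assoc _ _ _⟩, Lim.add hv' hv⟩)
  obtain ⟨⟨c, rfl⟩, hL⟩ := hwC
  exact ⟨c + u, hww, hb.ext c, hL⟩

theorem key_lemma (hT : ∀ x : X, Dense (Set.range fun n : ℤ => (T.toEquiv ^ n) x))
    (k : ℕ) (hk : k ≠ 0)
    (hTk : ∀ x : X, Dense (Set.range fun n : ℤ => ((T.toEquiv ^ k) ^ n) x))
    (x : X) (m : ℤ) (d : ℕ) {U : Set X} (hU : U ∈ 𝓝 x) :
    ∃ a n : ℤ, (k : ℤ) ∣ n - m ∧ ∀ i : ℕ, i ≤ d → (T.toEquiv ^ (a + i * n)) x ∈ U := by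
  obtain ⟨w, hw, hm, hwx⟩ := exists_w hT x
  obtain ⟨h, hP, hhx⟩ := exists_ultra (T := T) (y := x) (z := x) (P := {n | (k : ℤ) ∣ n - m}) (by
    refine closure_mono ?_ (hTk ((T.toEquiv ^ m) x) x)
    rintro _ ⟨n, rfl⟩
    refine ⟨k * n + m, by simp, ?_⟩
    simp only [zk, zadd])
  let f := w + h + w
  have hf : InG w f := InG.sandwich hw h
  have hfx : Lim T f x x := hwx.add (hhx.add hwx)
  have hwk := idem_dvd hw k hk
  have hfk : ∀ᶠ n in (f : Filter ℤ), (k : ℤ) ∣ n - m := by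
    change ∀ᶠ n in ((w + h + w : Ultrafilter ℤ) : Filter ℤ), (k : ℤ) ∣ n - m
    rw [Ultrafilter.eventually_add, Ultrafilter.eventually_add]
    filter_upwards [hwk] with a ha
    filter_upwards [hP] with b hb
    filter_upwards [hwk] with c hc
    have : a + b + c - m = a + (b - m) + c := by ring
    rw [this]
    exact dvd_add (dvd_add ha hb) hc
  have hFx : ∀ i, Lim T (Fp w f i) x x := by
    intro i
    induction i with
    | zero => exact hwx
    | succ i ih => exact Lim.add ih hfx
  obtain ⟨W, hW⟩ := exists_W hw hf hm d
  have h0 : ∀ᶠ p in (W : Filter (ℤ × ℤ)), (k : ℤ) ∣ p.1 := by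
    have e := hW 0 (by omega)
    have e' : Fp w f 0 = w := rfl
    rw [e'] at e
    rw [← e, Ultrafilter.coe_map, eventually_map] at hwk
    filter_upwards [hwk] with p hp
    simpa [kap_apply] using hp
  have h1 : ∀ᶠ p in (W : Filter (ℤ × ℤ)), (k : ℤ) ∣ p.1 + p.2 - m := by
    have e := hW 1 (by omega)
    have e' : Fp w f 1 = f := hf.2
    rw [e'] at e
    rw [← e, Ultrafilter.coe_map, eventually_map] at hfk
    filter_upwards [hfk] with p hp
    simpa [kap_apply] using hp
  have h2 : ∀ i : Fin (d + 1), ∀ᶠ p in (W : Filter (ℤ × ℤ)),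
      (T.toEquiv ^ (p.1 + ((i : ℕ) : ℤ) * p.2)) x ∈ U := by
    intro i
    have e := hW i (by omega)
    have h3 : ∀ᶠ n in (Fp w f i : Filter ℤ), (T.toEquiv ^ n) x ∈ U := hFx i hU
    rw [← e, Ultrafilter.coe_map, eventually_map] at h3
    exact h3
  obtain ⟨p, hp0, hp1, hp2⟩ := (h0.and (h1.and (eventually_all.2 h2))).exists
  refine ⟨p.1, p.2, ?_, fun i hi => hp2 ⟨i, by omega⟩⟩
  have : p.2 - m = (p.1 + p.2 - m) - p.1 := by ring
  rw [this]
  exact dvd_sub hp1 hp0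

theorem forward (hT : ∀ x : X, Dense (Set.range fun n : ℤ => (T.toEquiv ^ n) x))
    (k : ℕ) (hk : k ≠ 0)
    (hTk : ∀ x : X, Dense (Set.range fun n : ℤ => ((T.toEquiv ^ k) ^ n) x)) (d : ℕ) :
    Nd T.toEquiv d = Nd (T.toEquiv ^ k) d := by
  apply Set.Subset.antisymm
  · apply closure_minimal _ isClosed_closure
    rintro g ⟨x, n0, hg⟩
    rw [mem_closure_iff_nhds]
    intro O hO
    let G : (Fin d → X) → (Fin d → X) := fun z i => (T.toEquiv ^ (((i : ℕ) + 1 : ℤ) * n0)) (z i)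
    have hG : Continuous G :=
      continuous_pi fun i => (cont_zpow T _).comp (continuous_apply i)
    have hGx : G (fun _ => x) = g := by
      funext i
      exact (hg i).symm
    have hpre : G ⁻¹' O ∈ 𝓝 (fun _ : Fin d => x) := hG.continuousAt.preimage_mem_nhds (by rwa [hGx])
    rw [nhds_pi, Filter.mem_pi'] at hpre
    obtain ⟨I, t, ht, hsub⟩ := hpre
    obtain ⟨a, n, hn, hU⟩ := key_lemma hT k hk hTk x (-n0) d
      (U := ⋂ i, t i) (Filter.iInter_mem.2 ht)
    obtain ⟨r, hr⟩ := hn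
    refine ⟨G (fun i => (T.toEquiv ^ (a + (((i : ℕ) + 1 : ℕ) : ℤ) * n)) x), ?_,
      (T.toEquiv ^ a) x, r, ?_⟩
    · apply hsub
      intro i _
      exact Set.mem_iInter.1 (hU (i + 1) (by omega)) i
    · intro i
      simp only [G, zk, ← zadd]
      congr 2
      push_cast
      linear_combination ((i : ℕ) + 1 : ℤ) * hr
  · apply closure_mono
    rintro g ⟨x, n, hg⟩
    refine ⟨x, k * n, fun i => ?_⟩
    rw [hg i, zk]
    congr 2
    ring

theorem backward (hT : ∀ x : X, Dense (Set.range fun n : ℤ => (T.toEquiv ^ n) x))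
    (k : ℕ) (hk : k ≠ 0) (h : Nd T.toEquiv 2 = Nd (T.toEquiv ^ k) 2) (x : X) :
    Dense (Set.range fun n : ℤ => ((T.toEquiv ^ k) ^ n) x) := by
  by_contra hnd
  set A := closure (Set.range fun n : ℤ => ((T.toEquiv ^ k) ^ n) x) with hA
  have hAc : IsClosed A := isClosed_closure
  obtain ⟨z, hz⟩ : ∃ z, z ∉ A := by
    by_contra hcon
    push Not at hcon
    exact hnd hcon
  have hinv : ∀ (n : ℤ) (y : X), y ∈ A → (T.toEquiv ^ ((k : ℤ) * n)) y ∈ A := by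
    intro n y hy
    refine map_mem_closure (cont_zpow T (k * n)) hy ?_
    rintro _ ⟨m, rfl⟩
    refine ⟨n + m, ?_⟩
    simp only [zk, ← zadd]
    congr 2
    ring
  have hkz : (k : ℤ) ≠ 0 := by exact_mod_cast hk
  let B : Fin k → Set X := fun i => (fun y => (T.toEquiv ^ (-((i : ℕ) : ℤ))) y) ⁻¹' A
  have hBc : ∀ i, IsClosed (B i) := fun i => hAc.preimage (cont_zpow T _)
  have hBu : ⋃ i, B i = Set.univ := by
    have hcl : IsClosed (⋃ i, B i) := isClosed_iUnion_of_finite hBc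
    rw [← hcl.closure_eq]
    apply Dense.closure_eq
    apply (hT x).mono
    rintro _ ⟨n, rfl⟩
    have h1 := Int.emod_nonneg n hkz
    have h2 := Int.emod_lt_of_pos n (show (0 : ℤ) < k by omega)
    refine Set.mem_iUnion.2 ⟨⟨(n % k).toNat, by omega⟩, ?_⟩
    apply subset_closure
    refine ⟨n / k, ?_⟩
    simp only [zk, ← zadd]
    congr 2
    have := Int.emod_add_mul_ediv n k
    rw [Int.toNat_of_nonneg h1]
    linarith
  have : Nonempty X := ⟨x⟩
  obtain ⟨i, y0, hy0⟩ := nonempty_interior_of_iUnion_of_closed hBc hBu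
  let O : Set X := (fun y => (T.toEquiv ^ ((i : ℕ) : ℤ)) y) ⁻¹' interior (B i)
  have hO : IsOpen O := isOpen_interior.preimage (cont_zpow T _)
  have hOA : O ⊆ A := by
    intro y hy
    have h1 : (T.toEquiv ^ (-((i : ℕ) : ℤ))) ((T.toEquiv ^ ((i : ℕ) : ℤ)) y) ∈ A :=
      (interior_subset : interior (B i) ⊆ B i) hy
    rwa [← zadd, neg_add_cancel, zpow_zero] at h1
  have hz0 : (T.toEquiv ^ (-((i : ℕ) : ℤ))) y0 ∈ O := by
    change (T.toEquiv ^ ((i : ℕ) : ℤ)) ((T.toEquiv ^ (-((i : ℕ) : ℤ))) y0) ∈ interior (B i)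
    rw [← zadd, add_neg_cancel, zpow_zero]
    exact hy0
  generalize (T.toEquiv ^ (-((i : ℕ) : ℤ))) y0 = z0 at hz0
  obtain ⟨_, hn1, n, rfl⟩ := (hT z0).inter_open_nonempty _ hAc.isOpen_compl ⟨z, hz⟩
  let g : Fin 2 → X := fun j => (T.toEquiv ^ (((j : ℕ) + 1 : ℤ) * n)) ((T.toEquiv ^ (-n)) z0)
  have hg : g ∈ Nd (T.toEquiv ^ k) 2 := by
    rw [← h]
    exact subset_closure ⟨_, n, fun _ => rfl⟩
  have hopen : IsOpen {f : Fin 2 → X | f 0 ∈ O ∧ f 1 ∈ Aᶜ} := by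
    have c0 : Continuous (fun f : Fin 2 → X => f 0) := continuous_apply 0
    have c1 : Continuous (fun f : Fin 2 → X => f 1) := continuous_apply 1
    exact (hO.preimage c0).inter (hAc.isOpen_compl.preimage c1)
  obtain ⟨f, ⟨hf0, hf1⟩, y, r, hfy⟩ := mem_closure_iff.1 hg _ hopen (by
    refine ⟨?_, ?_⟩
    · simp only [g, ← zadd]
      simpa using hz0
    · simp only [g, ← zadd]
      have : (((1 : Fin 2) : ℕ) + 1 : ℤ) * n + -n = n := by
        simp; ring
      rw [this]
      exact hn1)
  apply hf1
  have e0 := hfy 0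
  have e1 := hfy 1
  rw [zk] at e0 e1
  have := hinv r _ (hOA hf0)
  rw [e0, ← zadd] at this
  rw [e1]
  convert this using 3
  simp; ring

end Dyn
end PM

/-- Let `(X,T)` be a minimal system and `k ≥ 2` an integer. Then `(X,T^k)` is
minimal iff `N_d(X,T) = N_d(X,T^k)` for each `d ∈ ℕ`. -/
theorem power_minimal_iff_nd_eq
    {X : Type*} [MetricSpace X] [CompactSpace X] (T : X ≃ₜ X)
    (hTmin : ∀ x : X, Dense (Set.range fun n : ℤ => (T.toEquiv ^ n) x))
    (k : ℕ) (hk : 2 ≤ k) :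
    (∀ x : X, Dense (Set.range fun n : ℤ => ((T.toEquiv ^ k) ^ n) x)) ↔
    (∀ d : ℕ, Nd T.toEquiv d = Nd (T.toEquiv ^ k) d) := by
  have hk0 : k ≠ 0 := by omega
  exact ⟨fun h d => PM.forward hTmin k hk0 h d, fun h x => PM.backward hTmin k hk0 (h 2) x⟩
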